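/- For every x ∈ X, sup_{T∈𝒯} (lim_{n→∞} p_T^n(x)) = pup*(x), where pup* := lim_{n→∞} pup^n; that is, the upper hitting probability of the imprecise Markov chain equals the supremum, over all transition matrices compatible with 𝒯, of the hitting probabilities of the corresponding homogeneous Markov chains (the supremum need not be attained). -/

import Mathlib

open Filter Topology

variable {X : Type*}

/-- The application of a transition "matrix" `T` to an extended-real-valued
function `f`, `(Tf)(x) = ∑ y, T x y * f y`, with the convention `0 * ⊤ = 0`
(which is the convention of `EReal` multiplication). -/
noncomputable def matApply [Fintype X] (T : X → X → ℝ) (f : X → EReal) (x : X) : EReal :=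
  ∑ y, (T x y : EReal) * f y

/-- `T` is a transition matrix: nonnegative entries, rows summing to one. -/
def IsTransMat [Fintype X] (T : X → X → ℝ) : Prop :=
  (∀ x y, 0 ≤ T x y) ∧ ∀ x, ∑ y, T x y = 1

/-- `𝒯` has separately specified rows. -/
def HasSepRows [Fintype X] (𝒯 : Set (X → X → ℝ)) : Prop :=
  ∀ sel : X → X → X → ℝ, (∀ x, sel x ∈ 𝒯) → ∃ T ∈ 𝒯, ∀ x y, T x y = sel x x y

/-- The lower transition operator of `𝒯`. -/
noncomputable def lowerOp [Fintype X] (𝒯 : Set (X → X → ℝ)) (f : X → EReal) (x : X) : EReal :=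
  ⨅ T ∈ 𝒯, matApply T f x

/-- The upper transition operator of `𝒯`. -/
noncomputable def upperOp [Fintype X] (𝒯 : Set (X → X → ℝ)) (f : X → EReal) (x : X) : EReal :=
  ⨆ T ∈ 𝒯, matApply T f x

/-- The `{0,1}`-indicator of a set `B ⊆ X`, as a real-valued function. -/
noncomputable def indR (B : Set X) : X → ℝ := fun x => Set.indicator B 1 x

/-- The restriction of the lower transition operator to real-valued functions
(on which it is real-valued). -/
noncomputable def lowerOpR [Fintype X] (𝒯 : Set (X → X → ℝ)) (f : X → ℝ) (x : X) : ℝ :=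
  (lowerOp 𝒯 (fun y => (f y : EReal)) x).toReal

/-- The restriction of the upper transition operator to real-valued functions
(on which it is real-valued). -/
noncomputable def upperOpR [Fintype X] (𝒯 : Set (X → X → ℝ)) (f : X → ℝ) (x : X) : ℝ :=
  (upperOp 𝒯 (fun y => (f y : EReal)) x).toReal

/-- The lower hitting-probability iterates: `plow⁰ = 1_A`,
`plowⁿ⁺¹ = 1_A + 1_{Aᶜ} · (L plowⁿ)`. -/
noncomputable def plowIter [Fintype X] (𝒯 : Set (X → X → ℝ)) (A : Set X) : ℕ → X → ℝ
  | 0 => indR A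
  | n + 1 => fun x => indR A x + indR Aᶜ x * lowerOpR 𝒯 (plowIter 𝒯 A n) x

/-- The upper hitting-probability iterates: `pup⁰ = 1_A`,
`pupⁿ⁺¹ = 1_A + 1_{Aᶜ} · (U pupⁿ)`. -/
noncomputable def pupIter [Fintype X] (𝒯 : Set (X → X → ℝ)) (A : Set X) : ℕ → X → ℝ
  | 0 => indR A
  | n + 1 => fun x => indR A x + indR Aᶜ x * upperOpR 𝒯 (pupIter 𝒯 A n) x
/-- The hitting-probability iterates for a single (precise) transition matrix `T`:
`p_T⁰ = 1_A`, `p_Tⁿ⁺¹ = 1_A + 1_{Aᶜ} · (T p_Tⁿ)`; their pointwise limit is the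
probability of ever hitting `A` for the homogeneous Markov chain with matrix `T`. -/
noncomputable def pPrecIter [Fintype X] (T : X → X → ℝ) (A : Set X) : ℕ → X → ℝ
  | 0 => indR A
  | n + 1 => fun x => indR A x + indR Aᶜ x * ∑ y, T x y * pPrecIter T A n y

section helpers

lemma aux_matApply [Fintype X] (T : X → X → ℝ) (f : X → ℝ) (x : X) :
    matApply T (fun y => (f y : EReal)) x = ((∑ y, T x y * f y : ℝ) : EReal) := by
  have h : ∀ s : Finset X, ∑ y ∈ s, (T x y : EReal) * (f y : EReal)
      = ((∑ y ∈ s, T x y * f y : ℝ) : EReal) := by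
    classical
    intro s
    induction s using Finset.induction_on with
    | empty => simp
    | insert a s ha ih => rw [Finset.sum_insert ha, Finset.sum_insert ha, ih]; push_cast; rfl
  exact h _

lemma aux_apply_mono [Fintype X] {T : X → X → ℝ} (hT : IsTransMat T) {f g : X → ℝ}
    (h : ∀ y, f y ≤ g y) (x : X) : ∑ y, T x y * f y ≤ ∑ y, T x y * g y :=
  Finset.sum_le_sum fun y _ => mul_le_mul_of_nonneg_left (h y) (hT.1 x y)

lemma aux_apply_const [Fintype X] {T : X → X → ℝ} (hT : IsTransMat T) (c : ℝ)
    (x : X) : ∑ y, T x y * c = c := by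
  rw [← Finset.sum_mul, hT.2 x, one_mul]

lemma aux_isLUB [Fintype X] {𝒯 : Set (X → X → ℝ)}
    (hmem : ∀ T ∈ 𝒯, IsTransMat T) (hne : 𝒯.Nonempty) (f : X → ℝ) (x : X) :
    IsLUB {v : ℝ | ∃ T ∈ 𝒯, v = ∑ y, T x y * f y} (upperOpR 𝒯 f x) := by
  have hle : ∀ T ∈ 𝒯, ((∑ y, T x y * f y : ℝ) : EReal) ≤ upperOp 𝒯 (fun y => (f y : EReal)) x := by
    intro T hT
    rw [← aux_matApply]
    exact le_iSup₂ (f := fun T (_ : T ∈ 𝒯) => matApply T (fun y => (f y : EReal)) x) T hT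
  have hub : ∀ b : ℝ, (∀ T ∈ 𝒯, ∑ y, T x y * f y ≤ b) →
      upperOp 𝒯 (fun y => (f y : EReal)) x ≤ (b : EReal) := by
    intro b hb
    refine iSup₂_le fun T hT => ?_
    rw [aux_matApply]
    exact_mod_cast hb T hT
  have hC : upperOp 𝒯 (fun y => (f y : EReal)) x ≤ ((∑ y, |f y| : ℝ) : EReal) := by
    apply hub
    intro T hT
    calc ∑ y, T x y * f y ≤ ∑ y, T x y * (∑ z, |f z|) :=
          aux_apply_mono (hmem T hT) (fun y => (le_abs_self _).trans
            (Finset.single_le_sum (f := fun z => |f z|) (fun _ _ => abs_nonneg _)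
              (Finset.mem_univ y))) x
      _ = _ := aux_apply_const (hmem T hT) _ x
  obtain ⟨T0, hT0⟩ := hne
  have h1 : upperOp 𝒯 (fun y => (f y : EReal)) x ≠ ⊤ :=
    ne_top_of_le_ne_top (EReal.coe_ne_top _) hC
  have h2 : upperOp 𝒯 (fun y => (f y : EReal)) x ≠ ⊥ :=
    ne_bot_of_le_ne_bot (EReal.coe_ne_bot _) (hle T0 hT0)
  have h3 : ((upperOpR 𝒯 f x : ℝ) : EReal) = upperOp 𝒯 (fun y => (f y : EReal)) x :=
    EReal.coe_toReal h1 h2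
  rw [← h3] at hle hub
  constructor
  · rintro v ⟨T, hT, rfl⟩
    exact_mod_cast hle T hT
  · intro b hb
    exact_mod_cast hub b (fun T hT => hb ⟨T, hT, rfl⟩)

variable [Fintype X] {𝒯 : Set (X → X → ℝ)}

lemma aux_U_mono (hmem : ∀ T ∈ 𝒯, IsTransMat T) (hne : 𝒯.Nonempty) {f g : X → ℝ}
    (h : ∀ y, f y ≤ g y) (x : X) : upperOpR 𝒯 f x ≤ upperOpR 𝒯 g x := by
  refine (aux_isLUB hmem hne f x).2 ?_
  rintro v ⟨T, hT, rfl⟩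
  exact (aux_apply_mono (hmem T hT) h x).trans ((aux_isLUB hmem hne g x).1 ⟨T, hT, rfl⟩)

lemma aux_U_const (hmem : ∀ T ∈ 𝒯, IsTransMat T) (hne : 𝒯.Nonempty) (c : ℝ) (x : X) :
    upperOpR 𝒯 (fun _ => c) x = c := by
  apply le_antisymm
  · refine (aux_isLUB hmem hne _ x).2 ?_
    rintro v ⟨T, hT, rfl⟩
    exact (aux_apply_const (hmem T hT) c x).le
  · obtain ⟨T, hT⟩ := id hne
    exact (aux_isLUB hmem hne _ x).1 ⟨T, hT, (aux_apply_const (hmem T hT) c x).symm⟩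

lemma aux_U_smul (hmem : ∀ T ∈ 𝒯, IsTransMat T) (hne : 𝒯.Nonempty) {c : ℝ} (hc : 0 < c)
    (f : X → ℝ) (x : X) : c * upperOpR 𝒯 f x ≤ upperOpR 𝒯 (fun y => c * f y) x := by
  rw [mul_comm, ← le_div_iff₀ hc]
  refine (aux_isLUB hmem hne f x).2 ?_
  rintro v ⟨T, hT, rfl⟩
  rw [le_div_iff₀ hc]
  refine (aux_isLUB hmem hne _ x).1 ⟨T, hT, ?_⟩
  rw [Finset.sum_mul]
  exact Finset.sum_congr rfl fun y _ => by ring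

lemma aux_indA {A : Set X} {x : X} (h : x ∈ A) : indR A x = 1 ∧ indR Aᶜ x = 0 := by
  simp [indR, h]

lemma aux_indAc {A : Set X} {x : X} (h : x ∉ A) : indR A x = 0 ∧ indR Aᶜ x = 1 := by
  simp [indR, h]

/-- Discounted iterates. -/
noncomputable def wIter (𝒯 : Set (X → X → ℝ)) (A : Set X) (β : ℝ) : ℕ → X → ℝ
  | 0 => indR A
  | n + 1 => fun x => indR A x + indR Aᶜ x * (β * upperOpR 𝒯 (wIter 𝒯 A β n) x)

lemma wIter_A (A : Set X) (β : ℝ) (n : ℕ) {x : X} (h : x ∈ A) : wIter 𝒯 A β n x = 1 := by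
  cases n <;> simp [wIter, aux_indA h]

lemma wIter_succ (A : Set X) (β : ℝ) (n : ℕ) {x : X} (h : x ∉ A) :
    wIter 𝒯 A β (n+1) x = β * upperOpR 𝒯 (wIter 𝒯 A β n) x := by
  simp [wIter, aux_indAc h]

lemma wIter_one (A : Set X) (n : ℕ) : wIter 𝒯 A 1 n = pupIter 𝒯 A n := by
  induction n with
  | zero => rfl
  | succ n ih => funext x; simp [wIter, pupIter, ih]

lemma wIter_bd (hmem : ∀ T ∈ 𝒯, IsTransMat T) (hne : 𝒯.Nonempty) (A : Set X) {β : ℝ}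
    (h0 : 0 ≤ β) (h1 : β ≤ 1) (n : ℕ) : ∀ x, 0 ≤ wIter 𝒯 A β n x ∧ wIter 𝒯 A β n x ≤ 1 := by
  induction n with
  | zero =>
    intro x
    by_cases h : x ∈ A
    · simp [wIter, aux_indA h]
    · simp [wIter, aux_indAc h]
  | succ n ih =>
    intro x
    by_cases h : x ∈ A
    · simp [wIter_A A β _ h]
    · rw [wIter_succ A β n h]
      have a := aux_U_mono hmem hne (fun y => (ih y).1) x
      have b := aux_U_mono hmem hne (fun y => (ih y).2) x
      rw [aux_U_const hmem hne] at a b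
      exact ⟨mul_nonneg h0 a, mul_le_one₀ h1 a b⟩

lemma wIter_mono (hmem : ∀ T ∈ 𝒯, IsTransMat T) (hne : 𝒯.Nonempty) (A : Set X) {β : ℝ}
    (h0 : 0 ≤ β) (h1 : β ≤ 1) (n : ℕ) : ∀ x, wIter 𝒯 A β n x ≤ wIter 𝒯 A β (n+1) x := by
  induction n with
  | zero =>
    intro x
    by_cases h : x ∈ A
    · simp [wIter_A A β _ h]
    · have := (wIter_bd hmem hne A h0 h1 1 x).1
      have e : wIter 𝒯 A β 0 x = 0 := (aux_indAc h).1
      rw [e]; exact this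
  | succ n ih =>
    intro x
    by_cases h : x ∈ A
    · simp [wIter_A A β _ h]
    · rw [wIter_succ A β n h, wIter_succ A β (n+1) h]
      exact mul_le_mul_of_nonneg_left (aux_U_mono hmem hne ih x) h0

lemma wIter_ge (hmem : ∀ T ∈ 𝒯, IsTransMat T) (hne : 𝒯.Nonempty) (A : Set X) {β : ℝ}
    (h0 : 0 < β) (h1 : β ≤ 1) (n : ℕ) : ∀ x, β ^ n * wIter 𝒯 A 1 n x ≤ wIter 𝒯 A β n x := by
  induction n with
  | zero => intro x; simp [wIter]
  | succ n ih =>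
    intro x
    by_cases h : x ∈ A
    · rw [wIter_A A _ _ h, wIter_A A _ _ h, mul_one]
      exact pow_le_one₀ h0.le h1
    · rw [wIter_succ A _ n h, wIter_succ A _ n h, pow_succ', one_mul, mul_assoc]
      exact mul_le_mul_of_nonneg_left ((aux_U_smul hmem hne (pow_pos h0 n) _ x).trans
        (aux_U_mono hmem hne ih x)) h0.le

lemma pPrec_A (T : X → X → ℝ) (A : Set X) (n : ℕ) {x : X} (h : x ∈ A) :
    pPrecIter T A n x = 1 := by
  cases n <;> simp [pPrecIter, aux_indA h]

lemma pPrec_succ (T : X → X → ℝ) (A : Set X) (n : ℕ) {x : X} (h : x ∉ A) :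
    pPrecIter T A (n+1) x = ∑ y, T x y * pPrecIter T A n y := by
  simp [pPrecIter, aux_indAc h]

lemma pPrec_nonneg {T : X → X → ℝ} (hT : IsTransMat T) (A : Set X) (n : ℕ) :
    ∀ x, 0 ≤ pPrecIter T A n x := by
  induction n with
  | zero =>
    intro x
    by_cases h : x ∈ A
    · simp [pPrecIter, aux_indA h]
    · simp [pPrecIter, aux_indAc h]
  | succ n ih =>
    intro x
    by_cases h : x ∈ A
    · simp [pPrec_A T A _ h]
    · rw [pPrec_succ T A n h]
      exact Finset.sum_nonneg fun y _ => mul_nonneg (hT.1 x y) (ih y)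

lemma pPrec_mono {T : X → X → ℝ} (hT : IsTransMat T) (A : Set X) (n : ℕ) :
    ∀ x, pPrecIter T A n x ≤ pPrecIter T A (n+1) x := by
  induction n with
  | zero =>
    intro x
    by_cases h : x ∈ A
    · simp [pPrec_A T A _ h]
    · have e : pPrecIter T A 0 x = 0 := (aux_indAc h).1
      rw [e]; exact pPrec_nonneg hT A 1 x
  | succ n ih =>
    intro x
    by_cases h : x ∈ A
    · simp [pPrec_A T A _ h]
    · rw [pPrec_succ T A n h, pPrec_succ T A (n+1) h]
      exact aux_apply_mono hT ih x

lemma pPrec_le (hmem : ∀ T ∈ 𝒯, IsTransMat T) (hne : 𝒯.Nonempty) {T : X → X → ℝ} (hT : T ∈ 𝒯)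
    (A : Set X) (n : ℕ) : ∀ x, pPrecIter T A n x ≤ wIter 𝒯 A 1 n x := by
  induction n with
  | zero => intro x; exact le_rfl
  | succ n ih =>
    intro x
    by_cases h : x ∈ A
    · simp [pPrec_A T A _ h, wIter_A A _ _ h]
    · rw [pPrec_succ T A n h, wIter_succ A _ n h, one_mul]
      exact (aux_apply_mono (hmem T hT) ih x).trans ((aux_isLUB hmem hne _ x).1 ⟨T, hT, rfl⟩)

lemma exists_good (hmem : ∀ T ∈ 𝒯, IsTransMat T) (hne : 𝒯.Nonempty) (hsep : HasSepRows 𝒯)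
    (A : Set X) {β δ : ℝ} (h0 : 0 < β) (h1 : β < 1) (hδ : 0 < δ) (m : ℕ) :
    ∃ T ∈ 𝒯, ∀ k x, wIter 𝒯 A β m x - β ^ k - δ / (1 - β) ≤ pPrecIter T A k x := by
  have : ∀ x, ∃ T ∈ 𝒯, upperOpR 𝒯 (wIter 𝒯 A β m) x - δ ≤ ∑ y, T x y * wIter 𝒯 A β m y := by
    intro x
    obtain ⟨v, ⟨T, hT, rfl⟩, h, -⟩ :=
      (aux_isLUB hmem hne (wIter 𝒯 A β m) x).exists_between (sub_lt_self _ hδ)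
    exact ⟨T, hT, h.le⟩
  choose sel hsel hs using this
  obtain ⟨T, hT, hTs⟩ := hsep sel hsel
  have hd : 0 ≤ δ / (1 - β) := div_nonneg hδ.le (by linarith)
  have hd2 : β * (δ / (1 - β)) + δ = δ / (1 - β) := by
    have : (1 - β) ≠ 0 := by linarith
    field_simp; ring
  refine ⟨T, hT, fun k => ?_⟩
  induction k with
  | zero =>
    intro x
    have := (wIter_bd hmem hne A h0.le h1.le m x).2
    have := pPrec_nonneg (hmem T hT) A 0 x
    rw [pow_zero]; linarith
  | succ k ih =>
    intro x
    by_cases h : x ∈ A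
    · rw [wIter_A A _ _ h, pPrec_A T A _ h]
      have := pow_pos h0 (k+1)
      linarith
    · have e1 := wIter_mono hmem hne A h0.le h1.le m x
      rw [wIter_succ A _ m h] at e1
      have e2 := hs x
      simp only [← hTs x] at e2
      have e3 := aux_apply_mono (hmem T hT) ih x
      simp only [sub_sub, mul_sub, Finset.sum_sub_distrib] at e3
      rw [aux_apply_const (hmem T hT), ← pPrec_succ T A k h] at e3
      have e4 := pPrec_nonneg (hmem T hT) A (k+1) x
      have e5 := mul_le_mul_of_nonneg_left e2 h0.le
      have e6 := mul_le_mul_of_nonneg_left e3 h0.le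
      have e7 := mul_le_of_le_one_left e4 h1.le
      have e8 : β * δ ≤ δ := mul_le_of_le_one_left hδ.le h1.le
      rw [pow_succ']
      linarith

end helpers

/-- The upper hitting probability of the imprecise Markov chain equals, at every state,
the supremum over all compatible transition matrices of the hitting probabilities of the
corresponding homogeneous Markov chains (the supremum need not be attained). -/
theorem upper_hitting_prob_is_sup [Fintype X] [Nonempty X]
    (𝒯 : Set (X → X → ℝ))
    (hmem : ∀ T ∈ 𝒯, IsTransMat T) (hne : 𝒯.Nonempty) (hcl : IsClosed 𝒯)
    (hcv : Convex ℝ 𝒯) (hsep : HasSepRows 𝒯) (A : Set X) :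
    ∃ pupStar : X → ℝ,
      (∀ x, Tendsto (fun n => pupIter 𝒯 A n x) atTop (𝓝 (pupStar x))) ∧
      ∀ x, IsLUB {v : ℝ | ∃ T ∈ 𝒯,
        Tendsto (fun n => pPrecIter T A n x) atTop (𝓝 v)} (pupStar x) := by
  have wm : ∀ x, Monotone (fun n => wIter 𝒯 A 1 n x) := fun x =>
    monotone_nat_of_le_succ fun n => wIter_mono hmem hne A zero_le_one le_rfl n x
  have wb : ∀ x, BddAbove (Set.range fun n => wIter 𝒯 A 1 n x) := fun x =>
    ⟨1, by rintro _ ⟨n, rfl⟩; exact (wIter_bd hmem hne A zero_le_one le_rfl n x).2⟩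
  refine ⟨fun x => ⨆ n, wIter 𝒯 A 1 n x, fun x => ?_, fun x => ⟨?_, ?_⟩⟩
  · simp only [← wIter_one]
    exact tendsto_atTop_ciSup (wm x) (wb x)
  · rintro v ⟨T, hT, hv⟩
    exact le_of_tendsto' hv fun n =>
      (pPrec_le hmem hne hT A n x).trans (le_ciSup (wb x) n)
  · intro b hb
    refine ciSup_le fun m => ?_
    have key : ∀ β δ : ℝ, 0 < β → β < 1 → 0 < δ → wIter 𝒯 A β m x - δ / (1 - β) ≤ b := by
      intro β δ h0 h1 hδ
      obtain ⟨T, hT, hk⟩ := exists_good hmem hne hsep A h0 h1 hδ m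
      have pm : Monotone (fun n => pPrecIter T A n x) :=
        monotone_nat_of_le_succ fun n => pPrec_mono (hmem T hT) A n x
      have pb : BddAbove (Set.range fun n => pPrecIter T A n x) :=
        ⟨1, by
          rintro _ ⟨n, rfl⟩
          exact (pPrec_le hmem hne hT A n x).trans
            (wIter_bd hmem hne A zero_le_one le_rfl n x).2⟩
      have ht := tendsto_atTop_ciSup pm pb
      refine le_trans ?_ (hb ⟨T, hT, ht⟩)
      have hp := tendsto_pow_atTop_nhds_zero_of_lt_one h0.le h1
      have hl : Tendsto (fun k => wIter 𝒯 A β m x - β ^ k - δ / (1 - β)) atTop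
          (𝓝 (wIter 𝒯 A β m x - 0 - δ / (1 - β))) := (hp.const_sub _).sub_const _
      rw [sub_zero] at hl
      exact le_of_tendsto_of_tendsto' hl ht fun k => hk k x
    have key2 : ∀ β : ℝ, 0 < β → β < 1 → β ^ m * wIter 𝒯 A 1 m x ≤ b := by
      intro β h0 h1
      refine (wIter_ge hmem hne A h0 h1.le m x).trans ?_
      refine le_of_forall_pos_le_add fun ε hε => ?_
      have h2 : 0 < 1 - β := by linarith
      have := key β (ε * (1 - β)) h0 h1 (mul_pos hε h2)
      rw [mul_div_assoc, div_self h2.ne', mul_one] at this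
      linarith
    have hc : Tendsto (fun β : ℝ => β ^ m * wIter 𝒯 A 1 m x) (𝓝[<] 1)
        (𝓝 (1 ^ m * wIter 𝒯 A 1 m x)) :=
      ((continuous_id.pow m).mul continuous_const).continuousAt.tendsto.mono_left
        nhdsWithin_le_nhds
    rw [one_pow, one_mul] at hc
    refine le_of_tendsto hc ?_
    filter_upwards [Ioo_mem_nhdsLT (zero_lt_one' ℝ)] with β hβ
    exact key2 β hβ.1 hβ.2
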